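/- The tensor product of two seminormal crystals is a seminormal crystal, and its string lengths are given by ε_i(b₁ ⊗ b₂) = max(ε_i(b₁), ε_i(b₂) − ⟨h_i, wt(b₁)⟩) and φ_i(b₁ ⊗ b₂) = max(φ_i(b₂), φ_i(b₁) + ⟨h_i, wt(b₂)⟩) for all i ∈ I and b₁ ∈ B₁, b₂ ∈ B₂. -/

import Mathlib

/-- Iterated application of a partial map `g : B → Option B`:
`iterOpt g k b` is `g^k b`, with `none` (i.e. `0`) absorbing. -/
def iterOpt {B : Type*} (g : B → Option B) : ℕ → B → Option B
  | 0, b => some b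
  | k + 1, b => (g b).bind (iterOpt g k)

/-- The generalized Cartan matrix conditions on a root datum given by simple
roots `α i ∈ P` and simple coroots `h i : P → ℤ`. -/
def IsGCM {I P : Type*} [AddCommGroup P] (α : I → P) (h : I → P →+ ℤ) : Prop :=
  (∀ i, h i (α i) = 2) ∧ (∀ i j, i ≠ j → h i (α j) ≤ 0) ∧
    (∀ i j, i ≠ j → (h i (α j) = 0 ↔ h j (α i) = 0))

/-- A seminormal crystal with index set `I`, over the root datum `(P, α, h)`,
with underlying set `B`.  The raising/lowering operators take values in
`Option B`, with `none` playing the role of `0`; `eps i b` and `phi i b` are the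
(finite) string lengths `max {k : e_i^k b ≠ 0}` and `max {k : f_i^k b ≠ 0}`. -/
structure SeminormalCrystal (I : Type*) {P : Type*} [AddCommGroup P]
    (α : I → P) (h : I → P →+ ℤ) (B : Type*) where
  e : I → B → Option B
  f : I → B → Option B
  wt : B → P
  ef_iff : ∀ (i : I) (b b' : B), e i b = some b' ↔ f i b' = some b
  wt_e : ∀ (i : I) (b b' : B), e i b = some b' → wt b' = wt b + α i
  eps : I → B → ℕ
  phi : I → B → ℕ
  eps_spec : ∀ (i : I) (b : B) (k : ℕ), (iterOpt (e i) k b).isSome ↔ k ≤ eps i b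
  phi_spec : ∀ (i : I) (b : B) (k : ℕ), (iterOpt (f i) k b).isSome ↔ k ≤ phi i b
  phi_sub_eps : ∀ (i : I) (b : B), (phi i b : ℤ) - (eps i b : ℤ) = h i (wt b)

/-- The group structure on `AddAut A` under composition (the former Mathlib
instance `AddAut.group`). -/
instance addAutGroup (A : Type*) [Add A] : Group (AddAut A) where
  mul g h := AddEquiv.trans h g
  one := AddEquiv.refl _
  inv := AddEquiv.symm
  mul_assoc _ _ _ := rfl
  one_mul _ := rfl
  mul_one _ := rfl
  inv_mul_cancel := AddEquiv.self_trans_symm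

/-- The simple reflection `s_i : λ ↦ λ - ⟨h_i, λ⟩ α_i` as an automorphism of
the weight lattice `P`. -/
def sAut {I P : Type*} [AddCommGroup P] (α : I → P) (h : I → P →+ ℤ)
    (hd : ∀ i, h i (α i) = 2) (i : I) : AddAut P where
  toFun x := x - h i x • α i
  invFun x := x - h i x • α i
  left_inv x := by
    simp only [map_sub, map_zsmul, hd i, smul_eq_mul]
    have : h i x - h i x * 2 = -(h i x) := by ring
    rw [this, neg_smul, sub_neg_eq_add, sub_add_cancel]
  right_inv x := by
    simp only [map_sub, map_zsmul, hd i, smul_eq_mul]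
    have : h i x - h i x * 2 = -(h i x) := by ring
    rw [this, neg_smul, sub_neg_eq_add, sub_add_cancel]
  map_add' x y := by
    simp only [map_add, add_smul]
    abel

/-- The Weyl group, the subgroup of `Aut(P)` generated by the simple
reflections. -/
def weylGroup {I P : Type*} [AddCommGroup P] (α : I → P) (h : I → P →+ ℤ)
    (hd : ∀ i, h i (α i) = 2) : Subgroup (AddAut P) :=
  Subgroup.closure (Set.range (sAut α h hd))

/-- The simple reflection `s_i`, as an element of the Weyl group. -/
def sW {I P : Type*} [AddCommGroup P] (α : I → P) (h : I → P →+ ℤ)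
    (hd : ∀ i, h i (α i) = 2) (i : I) : weylGroup α h hd :=
  ⟨sAut α h hd i, Subgroup.subset_closure ⟨i, rfl⟩⟩

/-- The Weyl group action operator `S_i` on a seminormal crystal:
`S_i b = f_i^{⟨h_i, wt b⟩} b` if `⟨h_i, wt b⟩ ≥ 0` and
`S_i b = e_i^{-⟨h_i, wt b⟩} b` otherwise (with junk value `b` if the result
would be `0`, which never happens). -/
def Sop {I P B : Type*} [AddCommGroup P] {α : I → P} {h : I → P →+ ℤ}
    (C : SeminormalCrystal I α h B) (i : I) (b : B) : B :=
  if 0 ≤ h i (C.wt b) then (iterOpt (C.f i) (h i (C.wt b)).toNat b).getD b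
  else (iterOpt (C.e i) (-(h i (C.wt b))).toNat b).getD b

/-- A seminormal crystal is regular if there is an action of the Weyl group on
`B` under which each simple reflection `s_i` acts by `S_i`. -/
def IsRegularCrystal {I P B : Type*} [AddCommGroup P] {α : I → P} {h : I → P →+ ℤ}
    (C : SeminormalCrystal I α h B) (hd : ∀ i, h i (α i) = 2) : Prop :=
  ∃ ρ : weylGroup α h hd →* Equiv.Perm B,
    ∀ (i : I) (b : B), ρ (sW α h hd i) b = Sop C i b

/-- `bw : W → B` witnesses that `b` is an extremal element of the seminormal
crystal `C`. -/
def IsExtremalFamily {I P B : Type*} [AddCommGroup P] {α : I → P} {h : I → P →+ ℤ}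
    (C : SeminormalCrystal I α h B) (hd : ∀ i, h i (α i) = 2)
    (b : B) (bw : weylGroup α h hd → B) : Prop :=
  bw 1 = b ∧
    ∀ (w : weylGroup α h hd) (i : I),
      (0 ≤ h i ((w : AddAut P) (C.wt b)) →
        C.e i (bw w) = none ∧
          iterOpt (C.f i) (h i ((w : AddAut P) (C.wt b))).toNat (bw w) =
            some (bw (sW α h hd i * w))) ∧
      (h i ((w : AddAut P) (C.wt b)) ≤ 0 →
        C.f i (bw w) = none ∧
          iterOpt (C.e i) (-(h i ((w : AddAut P) (C.wt b)))).toNat (bw w) =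
            some (bw (sW α h hd i * w)))

/-- An element of a seminormal crystal is extremal if it admits an extremal
family of elements indexed by the Weyl group. -/
def IsExtremal {I P B : Type*} [AddCommGroup P] {α : I → P} {h : I → P →+ ℤ}
    (C : SeminormalCrystal I α h B) (hd : ∀ i, h i (α i) = 2) (b : B) : Prop :=
  ∃ bw : weylGroup α h hd → B, IsExtremalFamily C hd b bw

/-- A finite regular seminormal crystal is simple if there is a weight
`lam ∈ P` such that every extremal element has weight in the Weyl group orbit
of `lam`, and exactly one element of `B` has weight `lam`. -/
def IsSimpleCrystal {I P B : Type*} [AddCommGroup P] {α : I → P} {h : I → P →+ ℤ}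
    (C : SeminormalCrystal I α h B) (hd : ∀ i, h i (α i) = 2) : Prop :=
  ∃ lam : P,
    (∀ b : B, IsExtremal C hd b →
      ∃ w : weylGroup α h hd, C.wt b = (w : AddAut P) lam) ∧
    (∃! b : B, C.wt b = lam)

/-- The (symmetric) adjacency relation of the crystal graph: `b` and `b'` are
joined by an edge when `b' = f_i b` or `b = f_i b'` for some `i`. -/
def CrystalRel {I P B : Type*} [AddCommGroup P] {α : I → P} {h : I → P →+ ℤ}
    (C : SeminormalCrystal I α h B) (b b' : B) : Prop :=
  ∃ i : I, C.f i b = some b' ∨ C.f i b' = some b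

/-- The raising operator of the tensor product `B₁ ⊗ B₂`:
`e_i (b₁ ⊗ b₂) = (e_i b₁) ⊗ b₂` if `φ_i(b₁) ≥ ε_i(b₂)`, and `b₁ ⊗ (e_i b₂)`
otherwise (with `x ⊗ 0 = 0 ⊗ x = 0`). -/
def tensorE {I P B₁ B₂ : Type*} [AddCommGroup P] {α : I → P} {h : I → P →+ ℤ}
    (C₁ : SeminormalCrystal I α h B₁) (C₂ : SeminormalCrystal I α h B₂)
    (i : I) (p : B₁ × B₂) : Option (B₁ × B₂) :=
  if C₂.eps i p.2 ≤ C₁.phi i p.1 then (C₁.e i p.1).map fun b => (b, p.2)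
  else (C₂.e i p.2).map fun b => (p.1, b)

/-- The lowering operator of the tensor product `B₁ ⊗ B₂`:
`f_i (b₁ ⊗ b₂) = (f_i b₁) ⊗ b₂` if `φ_i(b₁) > ε_i(b₂)`, and `b₁ ⊗ (f_i b₂)`
otherwise (with `x ⊗ 0 = 0 ⊗ x = 0`). -/
def tensorF {I P B₁ B₂ : Type*} [AddCommGroup P] {α : I → P} {h : I → P →+ ℤ}
    (C₁ : SeminormalCrystal I α h B₁) (C₂ : SeminormalCrystal I α h B₂)
    (i : I) (p : B₁ × B₂) : Option (B₁ × B₂) :=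
  if C₂.eps i p.2 < C₁.phi i p.1 then (C₁.f i p.1).map fun b => (b, p.2)
  else (C₂.f i p.2).map fun b => (p.1, b)

/-!
A function is the string length of a partial map exactly when it vanishes where the map is
undefined and drops by one along each step. By the signature rule, `min (φ_i b₁) (ε_i b₂)` pairs
cancel in `b₁ ⊗ b₂`, leaving the lengths `ε_i b₁ + (ε_i b₂ - φ_i b₁)⁺` and
`φ_i b₂ + (φ_i b₁ - ε_i b₂)⁺`. Along an edge `e_i p = p'` of the tensor product the two tests
`φ_i b₁ ≥ ε_i b₂` at `p` and `φ_i b₁ > ε_i b₂` at `p'` agree, because `e_i` raises `φ_i` by one and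
lowers `ε_i` by one; so `e_i` and `f_i` are mutually inverse, and both lengths change by one.
-/

theorem forall_isSome_iterOpt_iff {B : Type*} {g : B → Option B} {n : B → ℕ} :
    (∀ b k, (iterOpt g k b).isSome ↔ k ≤ n b) ↔
      (∀ b, g b = none → n b = 0) ∧ ∀ b b', g b = some b' → n b = n b' + 1 := by
  constructor
  · intro hn
    refine ⟨fun b hb ↦ ?_, fun b b' hb ↦ ?_⟩
    · have hnot : ¬ 1 ≤ n b := by simp [← hn, iterOpt, hb]
      omega
    · have hsucc (k : ℕ) : k + 1 ≤ n b ↔ k ≤ n b' := by simp [← hn, iterOpt, hb]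
      exact eq_of_forall_le_iff fun k ↦ by cases k <;> simp [hsucc]
  · rintro ⟨hnone, hsome⟩ b k
    induction k generalizing b with
    | zero => simp [iterOpt]
    | succ k ih =>
      cases hb : g b with
      | none => simp [iterOpt, hb, hnone b hb]
      | some b' => simp [iterOpt, hb, hsome b b' hb, ih]

namespace SeminormalCrystal

variable {I P : Type*} [AddCommGroup P] {α : I → P} {h : I → P →+ ℤ} {i : I}

section StringLengths

variable {B : Type*} (C : SeminormalCrystal I α h B) {b b' : B}

theorem eps_eq_zero_of_e_eq_none (hb : C.e i b = none) : C.eps i b = 0 :=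
  (forall_isSome_iterOpt_iff.1 (C.eps_spec i)).1 b hb

theorem phi_eq_zero_of_f_eq_none (hb : C.f i b = none) : C.phi i b = 0 :=
  (forall_isSome_iterOpt_iff.1 (C.phi_spec i)).1 b hb

theorem eps_eq_add_one_of_e_eq_some (hb : C.e i b = some b') : C.eps i b = C.eps i b' + 1 :=
  (forall_isSome_iterOpt_iff.1 (C.eps_spec i)).2 b b' hb

theorem phi_eq_add_one_of_e_eq_some (hb : C.e i b = some b') : C.phi i b' = C.phi i b + 1 :=
  (forall_isSome_iterOpt_iff.1 (C.phi_spec i)).2 b' b ((C.ef_iff i b b').1 hb)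

end StringLengths

section Tensor

variable {B₁ B₂ : Type*} (C₁ : SeminormalCrystal I α h B₁) (C₂ : SeminormalCrystal I α h B₂)
  {p p' : B₁ × B₂}

theorem tensorE_eq_some_iff :
    tensorE C₁ C₂ i p = some p' ↔
      (C₂.eps i p.2 ≤ C₁.phi i p.1 ∧ C₁.e i p.1 = some p'.1 ∧ p.2 = p'.2) ∨
        (C₁.phi i p.1 < C₂.eps i p.2 ∧ C₂.e i p.2 = some p'.2 ∧ p.1 = p'.1) := by
  by_cases hle : C₂.eps i p.2 ≤ C₁.phi i p.1
  · simp [tensorE, hle, not_lt_of_ge hle, Prod.ext_iff]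
  · simp [tensorE, hle, lt_of_not_ge hle, Prod.ext_iff]

theorem tensorF_eq_some_iff :
    tensorF C₁ C₂ i p = some p' ↔
      (C₂.eps i p.2 < C₁.phi i p.1 ∧ C₁.f i p.1 = some p'.1 ∧ p.2 = p'.2) ∨
        (C₁.phi i p.1 ≤ C₂.eps i p.2 ∧ C₂.f i p.2 = some p'.2 ∧ p.1 = p'.1) := by
  by_cases hlt : C₂.eps i p.2 < C₁.phi i p.1
  · simp [tensorF, hlt, not_le_of_gt hlt, Prod.ext_iff]
  · simp [tensorF, hlt, le_of_not_gt hlt, Prod.ext_iff]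

theorem tensorE_eq_some_iff_tensorF_eq_some :
    tensorE C₁ C₂ i p = some p' ↔ tensorF C₁ C₂ i p' = some p := by
  obtain ⟨b₁, b₂⟩ := p
  obtain ⟨b₁', b₂'⟩ := p'
  simp only [tensorE_eq_some_iff, tensorF_eq_some_iff, ← ef_iff, eq_comm (a := b₁'),
    eq_comm (a := b₂')]
  refine or_congr (and_congr_left ?_) (and_congr_left ?_)
  · rintro ⟨he, rfl⟩
    rw [C₁.phi_eq_add_one_of_e_eq_some he, Nat.lt_succ_iff]
  · rintro ⟨he, rfl⟩
    rw [C₂.eps_eq_add_one_of_e_eq_some he, Nat.lt_succ_iff]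

theorem wt_add_wt_of_tensorE_eq_some (hp : tensorE C₁ C₂ i p = some p') :
    C₁.wt p'.1 + C₂.wt p'.2 = C₁.wt p.1 + C₂.wt p.2 + α i := by
  obtain ⟨-, he, hb⟩ | ⟨-, he, hb⟩ := (tensorE_eq_some_iff C₁ C₂).1 hp
  · rw [C₁.wt_e i _ _ he, hb, add_right_comm]
  · rw [C₂.wt_e i _ _ he, hb, add_assoc]

/-- The string length `ε_i` of the tensor product. The subtraction is truncated: it counts the
part of the `i`-string of `b₂` that is not cancelled by `φ_i b₁`. -/
def tensorEps (i : I) (p : B₁ × B₂) : ℕ :=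
  C₁.eps i p.1 + (C₂.eps i p.2 - C₁.phi i p.1)

/-- The string length `φ_i` of the tensor product. The subtraction is truncated: it counts the
part of the `i`-string of `b₁` that is not cancelled by `ε_i b₂`. -/
def tensorPhi (i : I) (p : B₁ × B₂) : ℕ :=
  C₂.phi i p.2 + (C₁.phi i p.1 - C₂.eps i p.2)

theorem tensorEps_eq_zero_of_tensorE_eq_none (hp : tensorE C₁ C₂ i p = none) :
    tensorEps C₁ C₂ i p = 0 := by
  unfold tensorE at hp
  unfold tensorEps
  split_ifs at hp with hle
  · have heps := C₁.eps_eq_zero_of_e_eq_none (Option.map_eq_none_iff.1 hp)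
    omega
  · have heps := C₂.eps_eq_zero_of_e_eq_none (Option.map_eq_none_iff.1 hp)
    omega

theorem tensorPhi_eq_zero_of_tensorF_eq_none (hp : tensorF C₁ C₂ i p = none) :
    tensorPhi C₁ C₂ i p = 0 := by
  unfold tensorF at hp
  unfold tensorPhi
  split_ifs at hp with hlt
  · have hphi := C₁.phi_eq_zero_of_f_eq_none (Option.map_eq_none_iff.1 hp)
    omega
  · have hphi := C₂.phi_eq_zero_of_f_eq_none (Option.map_eq_none_iff.1 hp)
    omega

theorem tensorEps_eq_add_one_of_tensorE_eq_some (hp : tensorE C₁ C₂ i p = some p') :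
    tensorEps C₁ C₂ i p = tensorEps C₁ C₂ i p' + 1 := by
  unfold tensorEps
  obtain ⟨hle, he, hb⟩ | ⟨hlt, he, hb⟩ := (tensorE_eq_some_iff C₁ C₂).1 hp
  · have heps := C₁.eps_eq_add_one_of_e_eq_some he
    have hphi := C₁.phi_eq_add_one_of_e_eq_some he
    rw [← hb]
    omega
  · have heps := C₂.eps_eq_add_one_of_e_eq_some he
    rw [← hb]
    omega

theorem tensorPhi_eq_add_one_of_tensorE_eq_some (hp : tensorE C₁ C₂ i p = some p') :
    tensorPhi C₁ C₂ i p' = tensorPhi C₁ C₂ i p + 1 := by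
  unfold tensorPhi
  obtain ⟨hle, he, hb⟩ | ⟨hlt, he, hb⟩ := (tensorE_eq_some_iff C₁ C₂).1 hp
  · have hphi := C₁.phi_eq_add_one_of_e_eq_some he
    rw [← hb]
    omega
  · have heps := C₂.eps_eq_add_one_of_e_eq_some he
    have hphi := C₂.phi_eq_add_one_of_e_eq_some he
    rw [← hb]
    omega

theorem tensorPhi_sub_tensorEps (i : I) (p : B₁ × B₂) :
    (tensorPhi C₁ C₂ i p : ℤ) - tensorEps C₁ C₂ i p = h i (C₁.wt p.1 + C₂.wt p.2) := by
  rw [map_add, ← C₁.phi_sub_eps, ← C₂.phi_sub_eps, tensorPhi, tensorEps]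
  omega

theorem tensorEps_eq_max (i : I) (p : B₁ × B₂) :
    (tensorEps C₁ C₂ i p : ℤ) = max (C₁.eps i p.1 : ℤ) (C₂.eps i p.2 - h i (C₁.wt p.1)) := by
  rw [← C₁.phi_sub_eps, tensorEps]
  omega

theorem tensorPhi_eq_max (i : I) (p : B₁ × B₂) :
    (tensorPhi C₁ C₂ i p : ℤ) = max (C₂.phi i p.2 : ℤ) (C₁.phi i p.1 + h i (C₂.wt p.2)) := by
  rw [← C₂.phi_sub_eps, tensorPhi]
  omega

/-- The tensor product `C₁ ⊗ C₂` of two seminormal crystals. -/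
def tensor : SeminormalCrystal I α h (B₁ × B₂) where
  e := tensorE C₁ C₂
  f := tensorF C₁ C₂
  wt p := C₁.wt p.1 + C₂.wt p.2
  ef_iff _ _ _ := tensorE_eq_some_iff_tensorF_eq_some C₁ C₂
  wt_e _ _ _ := wt_add_wt_of_tensorE_eq_some C₁ C₂
  eps := tensorEps C₁ C₂
  phi := tensorPhi C₁ C₂
  eps_spec _ := forall_isSome_iterOpt_iff.2
    ⟨fun _ ↦ tensorEps_eq_zero_of_tensorE_eq_none C₁ C₂,
      fun _ _ ↦ tensorEps_eq_add_one_of_tensorE_eq_some C₁ C₂⟩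
  phi_spec _ := forall_isSome_iterOpt_iff.2
    ⟨fun _ ↦ tensorPhi_eq_zero_of_tensorF_eq_none C₁ C₂,
      fun _ _ hp ↦ tensorPhi_eq_add_one_of_tensorE_eq_some C₁ C₂
        ((tensorE_eq_some_iff_tensorF_eq_some C₁ C₂).2 hp)⟩
  phi_sub_eps := tensorPhi_sub_tensorEps C₁ C₂

end Tensor

end SeminormalCrystal

theorem tensor_is_seminormal_crystal_general
    {I P B₁ B₂ : Type*} [AddCommGroup P] (α : I → P) (h : I → P →+ ℤ)
    (C₁ : SeminormalCrystal I α h B₁) (C₂ : SeminormalCrystal I α h B₂) :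
    ∃ C : SeminormalCrystal I α h (B₁ × B₂),
      C.e = tensorE C₁ C₂ ∧ C.f = tensorF C₁ C₂ ∧
      (∀ p : B₁ × B₂, C.wt p = C₁.wt p.1 + C₂.wt p.2) ∧
      (∀ (i : I) (p : B₁ × B₂),
        (C.eps i p : ℤ) =
          max (C₁.eps i p.1 : ℤ) ((C₂.eps i p.2 : ℤ) - h i (C₁.wt p.1))) ∧
      (∀ (i : I) (p : B₁ × B₂),
        (C.phi i p : ℤ) =
          max (C₂.phi i p.2 : ℤ) ((C₁.phi i p.1 : ℤ) + h i (C₂.wt p.2))) :=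
  ⟨C₁.tensor C₂, rfl, rfl, fun _ ↦ rfl, C₁.tensorEps_eq_max C₂, C₁.tensorPhi_eq_max C₂⟩

/-- The tensor product of two seminormal crystals is a
seminormal crystal, with `wt (b₁ ⊗ b₂) = wt b₁ + wt b₂` and string lengths
`ε_i (b₁ ⊗ b₂) = max (ε_i b₁) (ε_i b₂ - ⟨h_i, wt b₁⟩)` and
`φ_i (b₁ ⊗ b₂) = max (φ_i b₂) (φ_i b₁ + ⟨h_i, wt b₂⟩)`. -/
theorem tensor_is_seminormal_crystal
    {I P B₁ B₂ : Type*} [Fintype I] [AddCommGroup P] [Module.Free ℤ P]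
    [Module.Finite ℤ P]
    (α : I → P) (h : I → P →+ ℤ) (hGCM : IsGCM α h)
    (C₁ : SeminormalCrystal I α h B₁) (C₂ : SeminormalCrystal I α h B₂) :
    ∃ C : SeminormalCrystal I α h (B₁ × B₂),
      C.e = tensorE C₁ C₂ ∧ C.f = tensorF C₁ C₂ ∧
      (∀ p : B₁ × B₂, C.wt p = C₁.wt p.1 + C₂.wt p.2) ∧
      (∀ (i : I) (p : B₁ × B₂),
        (C.eps i p : ℤ) =
          max (C₁.eps i p.1 : ℤ) ((C₂.eps i p.2 : ℤ) - h i (C₁.wt p.1))) ∧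
      (∀ (i : I) (p : B₁ × B₂),
        (C.phi i p : ℤ) =
          max (C₂.phi i p.2 : ℤ) ((C₁.phi i p.1 : ℤ) + h i (C₂.wt p.2))) :=
  tensor_is_seminormal_crystal_general α h C₁ C₂
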